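/- Slab tilings of contractible regions in ℝ³ do not have the local move property: for every n ∈ ℕ there exists a contractible region Γ ⊂ ℤ³ that has exactly two slab tilings T₁ ≠ T₂, and these two tilings differ in at least n tiles (|T₁ ∖ T₂| ≥ n). -/

import Mathlib

/-- A slab: a lattice copy of the `2 × 2 × 1` brick, i.e. a set of the form
`t + σ({0,1} × {0,1} × {0})` where `σ` permutes the three coordinates. -/
def IsSlab (s : Set (Fin 3 → ℤ)) : Prop :=
  ∃ (t : Fin 3 → ℤ) (σ : Equiv.Perm (Fin 3)),
    s = (fun v : Fin 3 → ℤ => t + v ∘ ⇑σ) ''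
      {v | (v 0 = 0 ∨ v 0 = 1) ∧ (v 1 = 0 ∨ v 1 = 1) ∧ v 2 = 0}

/-- A tiling of `Γ` by tiles satisfying `P`: a partition of `Γ` into such tiles. -/
def IsTiling {α : Type*} (P : Set α → Prop) (Γ : Set α) (T : Set (Set α)) : Prop :=
  (∀ s ∈ T, P s ∧ s.Nonempty) ∧ T.PairwiseDisjoint id ∧ ⋃₀ T = Γ

/-- The closed region `Γ̄ = ⋃_{v ∈ Γ} (v + [0,1]^d) ⊂ ℝ^d` associated to `Γ ⊂ ℤ^d`. -/
def cubeClosure {d : ℕ} (Γ : Set (Fin d → ℤ)) : Set (Fin d → ℝ) :=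
  ⋃ v ∈ Γ, {x : Fin d → ℝ | ∀ i, (v i : ℝ) ≤ x i ∧ x i ≤ (v i : ℝ) + 1}

/-- A contractible region: a finite `Γ ⊂ ℤ^d` such that `Γ̄` is contractible and has
contractible interior. -/
def IsContractibleRegion {d : ℕ} (Γ : Set (Fin d → ℤ)) : Prop :=
  Γ.Finite ∧ ContractibleSpace ↥(cubeClosure Γ) ∧
    ContractibleSpace ↥(interior (cubeClosure Γ))

/-!
The region is a tray: a floor of `4 × (2m + 2)` cubes with a second layer of cubes on its rim.
Squashing the vertical direction contracts it. In a slab tiling the top cube of each rim column can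
only be covered by an upright slab over a domino of rim cells, so the tiling restricts to a domino
tiling of the rim, which is an even cycle and has exactly two of them, without common dominoes.
The slabs over the `2 × 2m` rectangle inside the rim then lie flat on the floor, each spans its
width, and the rectangle fills up from one end in a unique way.
-/

section Contractibility

open Set Function

lemma contractibleSpace_of_segment_subset {E : Type*} [AddCommGroup E] [Module ℝ E]
    [TopologicalSpace E] [ContinuousAdd E] [ContinuousSMul ℝ E] {S B : Set E} {f : E → E}
    (hf : Continuous f) (hB : Convex ℝ B) (hne : B.Nonempty) (hBS : B ⊆ S) (hSB : MapsTo f S B)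
    (hseg : ∀ p ∈ S, segment ℝ p (f p) ⊆ S) : ContractibleSpace S := by
  let retract : C(S, B) := ⟨fun p => ⟨f p, hSB p.2⟩, by fun_prop⟩
  let incl : C(B, S) := ⟨inclusion hBS, continuous_inclusion hBS⟩
  have homotopic : (ContinuousMap.id S).Homotopic (incl.comp retract) := by
    refine ⟨⟨⟨fun tp => ⟨(1 - (tp.1 : ℝ)) • (tp.2 : E) + (tp.1 : ℝ) • f tp.2,
      hseg _ tp.2.2 ⟨1 - tp.1, tp.1, ?_, tp.1.2.1, by ring, rfl⟩⟩, ?_⟩, ?_, ?_⟩⟩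
    · exact sub_nonneg.2 tp.1.2.2
    · exact Continuous.subtype_mk (by fun_prop) _
    · intro p
      simp
    · intro p
      simp [retract, incl, inclusion]
  have := hB.contractibleSpace hne
  obtain ⟨q, hq⟩ := ((id_nullhomotopic B).comp_left retract).comp_right incl
  exact (contractible_iff_id_nullhomotopic S).2 ⟨q, homotopic.trans hq⟩

section Scaling

variable {A : Type*} [Ring A] [Algebra ℝ A] [TopologicalSpace A] [IsTopologicalRing A]
  [ContinuousSMul ℝ A] {S B : Set A} {c : A}

lemma contractibleSpace_of_mul_mem (hB : Convex ℝ B) (hne : B.Nonempty) (hBS : B ⊆ S)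
    (hSB : MapsTo (c * ·) S B) (hS : ∀ a ∈ segment ℝ 1 c, MapsTo (a * ·) S S) :
    ContractibleSpace S := by
  refine contractibleSpace_of_segment_subset (by fun_prop) hB hne hBS hSB fun p hp => ?_
  rintro _ ⟨r, t, hr, ht, hrt, rfl⟩
  simpa [add_mul] using hS (r • 1 + t • c) ⟨r, t, hr, ht, hrt, rfl⟩ hp

lemma contractibleSpace_interior_of_mul_mem (hB : Convex ℝ B) (hne : (interior B).Nonempty)
    (hBS : B ⊆ S) (hSB : MapsTo (c * ·) S B) (hS : ∀ a ∈ segment ℝ 1 c, MapsTo (a * ·) S S)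
    (hunit : ∀ a ∈ segment ℝ 1 c, IsUnit a) : ContractibleSpace (interior S) :=
  contractibleSpace_of_mul_mem hB.interior hne (interior_mono hBS)
    ((hunit c (right_mem_segment ℝ 1 c)).isOpenMap_smul.mapsTo_interior hSB)
    fun a ha => (hunit a ha).isOpenMap_smul.mapsTo_interior (hS a ha)

end Scaling

section HeightField

variable {d : ℕ}

lemma mem_cubeClosure {Γ : Set (Fin d → ℤ)} {p : Fin d → ℝ} :
    p ∈ cubeClosure Γ ↔ ∃ v ∈ Γ, ∀ i, p i ∈ Icc (v i : ℝ) (v i + 1) := by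
  simp [cubeClosure]

lemma exists_int_mem_Icc_of_mem_Icc {a b : ℤ} (hab : a ≤ b) {x : ℝ}
    (hx : x ∈ Icc (a : ℝ) (b + 1)) : ∃ z ∈ Icc a b, x ∈ Icc (z : ℝ) (z + 1) := by
  obtain hxb | hbx := le_total x b
  · exact ⟨⌊x⌋, ⟨Int.le_floor.2 hx.1, by exact_mod_cast (Int.floor_le x).trans hxb⟩,
      Int.floor_le x, (Int.lt_floor_add_one x).le⟩
  · exact ⟨b, right_mem_Icc.2 hab, hbx, hx.2⟩

lemma cubeClosure_Icc {a b : Fin d → ℤ} (hab : a ≤ b) :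
    cubeClosure (Icc a b) = Icc (fun i => (a i : ℝ)) (fun i => (b i : ℝ) + 1) := by
  ext p
  rw [mem_cubeClosure]
  constructor
  · rintro ⟨v, hv, hp⟩
    have lower (i) : (a i : ℝ) ≤ v i := by exact_mod_cast hv.1 i
    have upper (i) : (v i : ℝ) ≤ b i := by exact_mod_cast hv.2 i
    exact ⟨fun i => (lower i).trans (hp i).1, fun i => (hp i).2.trans (add_le_add_left (upper i) 1)⟩
  · intro hp
    choose v hv hpv using fun i => exists_int_mem_Icc_of_mem_Icc (hab i) ⟨hp.1 i, hp.2 i⟩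
    exact ⟨v, ⟨fun i => (hv i).1, fun i => (hv i).2⟩, hpv⟩

lemma cubeClosure_mono {Γ Δ : Set (Fin d → ℤ)} (h : Γ ⊆ Δ) : cubeClosure Γ ⊆ cubeClosure Δ :=
  biUnion_mono h fun _ _ => Subset.rfl

lemma mul_mem_cubeClosure {Γ : Set (Fin d → ℤ)} {j : Fin d} (hnonneg : ∀ v ∈ Γ, 0 ≤ v j)
    (hdown : ∀ v ∈ Γ, ∀ z ∈ Icc 0 (v j), update v j z ∈ Γ) {s : ℝ} (hs : s ∈ Icc 0 1) :
    MapsTo (Pi.mulSingle j s * ·) (cubeClosure Γ) (cubeClosure Γ) := by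
  intro p hp
  obtain ⟨v, hv, hpv⟩ := mem_cubeClosure.1 hp
  have hv0 : (0 : ℝ) ≤ v j := by exact_mod_cast hnonneg v hv
  have hp0 : 0 ≤ p j := hv0.trans (hpv j).1
  obtain ⟨z, hz, hpz⟩ : ∃ z ∈ Icc 0 (v j), s * p j ∈ Icc (z : ℝ) (z + 1) :=
    exists_int_mem_Icc_of_mem_Icc (hnonneg v hv)
      ⟨by simpa using mul_nonneg hs.1 hp0, (mul_le_of_le_one_left hp0 hs.2).trans (hpv j).2⟩
  refine mem_cubeClosure.2 ⟨update v j z, hdown v hv z hz, fun i => ?_⟩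
  obtain rfl | hij := eq_or_ne i j
  · simpa using hpz
  · simpa [hij] using hpv i

lemma mulSingle_inv_mul_mem_cubeClosure {a b : Fin d → ℤ} (hab : a ≤ b) {j : Fin d}
    (haj : a j = 0) : MapsTo (Pi.mulSingle j ((b j : ℝ) + 1)⁻¹ * ·) (cubeClosure (Icc a b))
      (cubeClosure (Icc a (update b j 0))) := by
  have hbj : (0 : ℝ) < b j + 1 := by exact_mod_cast Int.lt_add_one_of_le (haj ▸ hab j)
  intro p hp
  rw [cubeClosure_Icc hab] at hp
  rw [cubeClosure_Icc (le_update_iff.2 ⟨haj.le, fun i _ => hab i⟩), ← pi_univ_Icc]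
  intro i _
  have hpi : p i ∈ Icc (a i : ℝ) (b i + 1) := ⟨hp.1 i, hp.2 i⟩
  obtain rfl | hij := eq_or_ne i j
  · have hpi0 : 0 ≤ p i := by simpa [haj] using hpi.1
    simpa [haj, inv_mul_le_iff₀ hbj] using And.intro (by positivity) hpi.2
  · simpa [hij] using hpi

lemma exists_mem_segment_eq_mulSingle {ι : Type*} [DecidableEq ι] {j : ι} {r : ℝ} {c : ι → ℝ}
    (hc : c ∈ segment ℝ 1 (Pi.mulSingle j r)) : ∃ s ∈ segment ℝ 1 r, c = Pi.mulSingle j s := by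
  obtain ⟨t, u, ht, hu, htu, rfl⟩ := hc
  refine ⟨t • 1 + u • r, ⟨t, u, ht, hu, htu, rfl⟩, ?_⟩
  ext i
  obtain rfl | hij := eq_or_ne i j <;> simp [*]

lemma isUnit_mulSingle {ι : Type*} [DecidableEq ι] {j : ι} {s : ℝ} (hs : s ≠ 0) :
    IsUnit (Pi.mulSingle j s : ι → ℝ) := by
  refine Pi.isUnit_iff.2 fun i => ?_
  obtain rfl | hij := eq_or_ne i j <;> simp [*]

lemma convex_cubeClosure_Icc {a b : Fin d → ℤ} (hab : a ≤ b) :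
    Convex ℝ (cubeClosure (Icc a b)) := by
  rw [cubeClosure_Icc hab]
  exact convex_Icc _ _

lemma nonempty_interior_cubeClosure {Γ : Set (Fin d → ℤ)} (hΓ : Γ.Nonempty) :
    (interior (cubeClosure Γ)).Nonempty := by
  obtain ⟨v, hv⟩ := hΓ
  refine Nonempty.mono (interior_mono (cubeClosure_mono (singleton_subset_iff.2 hv))) ?_
  rw [← Icc_self, cubeClosure_Icc le_rfl, ← pi_univ_Icc, interior_pi_set finite_univ,
    univ_pi_nonempty_iff]
  intro i
  simp [interior_Icc]

/-- The columns of `Γ` in direction `j` stand on the full floor `v j = 0` of a box, so squashing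
direction `j` deforms `Γ̄` into the convex body over this floor. -/
lemma isContractibleRegion_of_update_mem {Γ : Set (Fin d → ℤ)} {j : Fin d} {a b : Fin d → ℤ}
    (hab : a ≤ b) (haj : a j = 0) (hΓ : Γ ⊆ Icc a b) (hfloor : Icc a (update b j 0) ⊆ Γ)
    (hdown : ∀ v ∈ Γ, ∀ z ∈ Icc 0 (v j), update v j z ∈ Γ) : IsContractibleRegion Γ := by
  have hfloor_le : a ≤ update b j 0 := le_update_iff.2 ⟨haj.le, fun i _ => hab i⟩
  have hbj : (1 : ℝ) ≤ b j + 1 :=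
    le_add_of_nonneg_left (by exact_mod_cast haj ▸ hab j)
  have hfactor : ∀ c ∈ segment ℝ 1 (Pi.mulSingle j ((b j : ℝ) + 1)⁻¹),
      ∃ s ∈ Ioc (0 : ℝ) 1, c = Pi.mulSingle j s := by
    intro c hc
    obtain ⟨s, hs, rfl⟩ := exists_mem_segment_eq_mulSingle hc
    rw [segment_symm, segment_eq_Icc (inv_le_one_of_one_le₀ hbj)] at hs
    exact ⟨s, ⟨lt_of_lt_of_le (by positivity) hs.1, hs.2⟩, rfl⟩
  have hS : ∀ c ∈ segment ℝ 1 (Pi.mulSingle j ((b j : ℝ) + 1)⁻¹),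
      MapsTo (c * ·) (cubeClosure Γ) (cubeClosure Γ) := by
    intro c hc
    obtain ⟨s, hs, rfl⟩ := hfactor c hc
    exact mul_mem_cubeClosure (fun v hv => haj ▸ (hΓ hv).1 j) hdown (Ioc_subset_Icc_self hs)
  have hunit : ∀ c ∈ segment ℝ 1 (Pi.mulSingle j ((b j : ℝ) + 1)⁻¹), IsUnit c := by
    intro c hc
    obtain ⟨s, hs, rfl⟩ := hfactor c hc
    exact isUnit_mulSingle hs.1.ne'
  have hB := convex_cubeClosure_Icc hfloor_le
  have hne := nonempty_interior_cubeClosure (nonempty_Icc.2 hfloor_le)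
  have hBS := cubeClosure_mono hfloor
  have hSB := (mulSingle_inv_mul_mem_cubeClosure hab haj).mono_left (cubeClosure_mono hΓ)
  exact ⟨(finite_Icc a b).subset hΓ,
    contractibleSpace_of_mul_mem hB (hne.mono interior_subset) hBS hSB hS,
    contractibleSpace_interior_of_mul_mem hB hne hBS hSB hS hunit⟩

end HeightField

end Contractibility

namespace IsTiling

variable {α : Type*} {P : Set α → Prop} {Γ : Set α} {T : Set (Set α)}

lemma eq_of_mem_of_mem (hT : IsTiling P Γ T) {s t : Set α} (hs : s ∈ T) (ht : t ∈ T) {v : α}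
    (hvs : v ∈ s) (hvt : v ∈ t) : s = t :=
  hT.2.1.elim_set hs ht v hvs hvt

lemma subset (hT : IsTiling P Γ T) {s : Set α} (hs : s ∈ T) : s ⊆ Γ :=
  hT.2.2 ▸ Set.subset_sUnion_of_mem hs

lemma exists_mem (hT : IsTiling P Γ T) {v : α} (hv : v ∈ Γ) : ∃ s ∈ T, v ∈ s :=
  hT.2.2.superset hv

lemma eq_of_subset {T' : Set (Set α)} (hT : IsTiling P Γ T) (hT' : IsTiling P Γ T')
    (hsub : T' ⊆ T) : T = T' := by
  refine Set.Subset.antisymm (fun s hs => ?_) hsub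
  obtain ⟨p, hp⟩ := (hT.1 s hs).2
  obtain ⟨t, ht, hpt⟩ := hT'.exists_mem (hT.subset hs hp)
  rwa [hT.eq_of_mem_of_mem hs (hsub ht) hp hpt]

lemma add_two_mul_mem (hT : IsTiling P Γ T) {W : ℕ → Set α} {L : ℕ}
    (hoverlap : ∀ k, (W k ∩ W (k + 1)).Nonempty) (hne : ∀ k, k + 1 < L → W k ≠ W (k + 1))
    (hcover : ∀ k, k + 1 < L → W k ∈ T ∨ W (k + 1) ∈ T) {i : ℕ} (hi : W i ∈ T) (j : ℕ)
    (hj : i + 2 * j < L) : W (i + 2 * j) ∈ T := by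
  induction j with
  | zero => exact hi
  | succ j ih =>
    have hlast : W (i + 2 * j) ∈ T := ih (by omega)
    have hnext : W (i + 2 * j + 1) ∉ T := fun h =>
      have ⟨_, hv, hv'⟩ := hoverlap (i + 2 * j)
      hne _ (by omega) (hT.eq_of_mem_of_mem hlast h hv hv')
    exact (hcover (i + 2 * j + 1) (by omega)).resolve_left hnext

end IsTiling

section Slabs

/-- The slab with lowest corner `t` and normal direction `i`. -/
def slab (i : Fin 3) (t : Fin 3 → ℤ) : Set (Fin 3 → ℤ) :=
  {v | ∀ j, v j = t j ∨ j ≠ i ∧ v j = t j + 1}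

lemma image_perm_eq_slab (t : Fin 3 → ℤ) (σ : Equiv.Perm (Fin 3)) :
    (fun v : Fin 3 → ℤ => t + v ∘ ⇑σ) ''
      {v | (v 0 = 0 ∨ v 0 = 1) ∧ (v 1 = 0 ∨ v 1 = 1) ∧ v 2 = 0} = slab (σ.symm 2) t := by
  ext w
  constructor
  · rintro ⟨v, ⟨h0, h1, h2⟩, rfl⟩ j
    obtain ⟨i, rfl⟩ := σ.symm.surjective j
    fin_cases i <;> simp_all
  · intro hw
    refine ⟨fun i => w (σ.symm i) - t (σ.symm i), ⟨?_, ?_, ?_⟩, ?_⟩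
    · have := hw (σ.symm 0)
      grind
    · have := hw (σ.symm 1)
      grind
    · have := hw (σ.symm 2)
      grind
    · ext j
      simp

lemma isSlab_iff {s : Set (Fin 3 → ℤ)} : IsSlab s ↔ ∃ i t, s = slab i t := by
  constructor
  · rintro ⟨t, σ, rfl⟩
    exact ⟨σ.symm 2, t, image_perm_eq_slab t σ⟩
  · rintro ⟨i, t, rfl⟩
    exact ⟨t, Equiv.swap i 2, by simp [image_perm_eq_slab]⟩

lemma isSlab_slab (i : Fin 3) (t : Fin 3 → ℤ) : IsSlab (slab i t) := isSlab_iff.2 ⟨i, t, rfl⟩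

lemma slab_nonempty (i : Fin 3) (t : Fin 3 → ℤ) : (slab i t).Nonempty := ⟨t, fun _ => .inl rfl⟩

lemma mem_slab {i : Fin 3} {t v : Fin 3 → ℤ} : v ∈ slab i t ↔
    (v 0 = t 0 ∨ 0 ≠ i ∧ v 0 = t 0 + 1) ∧ (v 1 = t 1 ∨ 1 ≠ i ∧ v 1 = t 1 + 1) ∧
      (v 2 = t 2 ∨ 2 ≠ i ∧ v 2 = t 2 + 1) := by
  simp [slab, Fin.forall_fin_succ]

/-- The cell of `ℤ²` below a cube. -/
def shadow (v : Fin 3 → ℤ) : ℤ × ℤ := (v 0, v 1)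

/-- The two cubes at heights `0` and `1` above a cell of `ℤ²`. -/
def column (p : ℤ × ℤ) : Set (Fin 3 → ℤ) := {v | shadow v = p ∧ (v 2 = 0 ∨ v 2 = 1)}

/-- Two cells of `ℤ²` that share an edge. -/
def CellAdj (p q : ℤ × ℤ) : Prop := (p.1 - q.1).natAbs + (p.2 - q.2).natAbs = 1

lemma mem_column {p : ℤ × ℤ} {v : Fin 3 → ℤ} :
    v ∈ column p ↔ (v 0 = p.1 ∧ v 1 = p.2) ∧ (v 2 = 0 ∨ v 2 = 1) := by
  simp [column, shadow, Prod.ext_iff]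

lemma exists_column_union_eq_slab {p q : ℤ × ℤ} (h : CellAdj p q) :
    ∃ i t, column p ∪ column q = slab i t := by
  obtain hx | hy : p.1 = q.1 ∨ p.2 = q.2 := by unfold CellAdj at h; omega
  · refine ⟨0, ![p.1, min p.2 q.2, 0], ?_⟩
    ext v
    simp only [Set.mem_union, mem_column, mem_slab, Matrix.cons_val]
    grind [CellAdj]
  · refine ⟨1, ![min p.1 q.1, p.2, 0], ?_⟩
    ext v
    simp only [Set.mem_union, mem_column, mem_slab, Matrix.cons_val]
    grind [CellAdj]

lemma exists_slab_eq_column_union {i : Fin 3} {t v : Fin 3 → ℤ} (hi : i ≠ 2) (ht : t 2 = 0)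
    (hv : v ∈ slab i t) : ∃ q, CellAdj (shadow v) q ∧ slab i t = column (shadow v) ∪ column q := by
  rw [mem_slab] at hv
  obtain rfl | rfl : i = 0 ∨ i = 1 := by omega
  · refine ⟨(v 0, 2 * t 1 + 1 - v 1), by grind [CellAdj, shadow], ?_⟩
    ext w
    simp only [Set.mem_union, mem_column, mem_slab, shadow]
    grind
  · refine ⟨(2 * t 0 + 1 - v 0, v 1), by grind [CellAdj, shadow], ?_⟩
    ext w
    simp only [Set.mem_union, mem_column, mem_slab, shadow]
    grind

end Slabs

section Tray

/-- The boundary cells of the rectangle `{0, …, 3} × {0, …, 2m + 1}`. -/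
def rim (m : ℕ) : Set (ℤ × ℤ) :=
  {p | p ∈ Set.Icc (0, 0) (3, 2 * (m : ℤ) + 1) ∧
    (p.1 = 0 ∨ p.1 = 3 ∨ p.2 = 0 ∨ p.2 = 2 * (m : ℤ) + 1)}

/-- The floor `{0, …, 3} × {0, …, 2m + 1}` at height `0`, with a wall of height two along its
rim. -/
def tray (m : ℕ) : Set (Fin 3 → ℤ) :=
  {v | shadow v ∈ Set.Icc (0, 0) (3, 2 * (m : ℤ) + 1) ∧ (v 2 = 0 ∨ v 2 = 1 ∧ shadow v ∈ rim m)}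

lemma mem_rim {m : ℕ} {p : ℤ × ℤ} : p ∈ rim m ↔
    ((0 ≤ p.1 ∧ 0 ≤ p.2) ∧ p.1 ≤ 3 ∧ p.2 ≤ 2 * m + 1) ∧
      (p.1 = 0 ∨ p.1 = 3 ∨ p.2 = 0 ∨ p.2 = 2 * m + 1) :=
  Iff.rfl

lemma mem_tray {m : ℕ} {v : Fin 3 → ℤ} : v ∈ tray m ↔
    ((0 ≤ v 0 ∧ 0 ≤ v 1) ∧ v 0 ≤ 3 ∧ v 1 ≤ 2 * m + 1) ∧
      (v 2 = 0 ∨ v 2 = 1 ∧ (v 0 = 0 ∨ v 0 = 3 ∨ v 1 = 0 ∨ v 1 = 2 * m + 1)) := by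
  simp only [tray, rim, shadow, Set.mem_ofPred_eq, Set.mem_Icc, Prod.mk_le_mk]
  tauto

lemma isContractibleRegion_tray (m : ℕ) : IsContractibleRegion (tray m) := by
  have mem_box {b v : Fin 3 → ℤ} :
      v ∈ Set.Icc 0 b ↔ (0 ≤ v 0 ∧ 0 ≤ v 1 ∧ 0 ≤ v 2) ∧ v 0 ≤ b 0 ∧ v 1 ≤ b 1 ∧ v 2 ≤ b 2 := by
    simp [Pi.le_def, Fin.forall_fin_succ]
  refine isContractibleRegion_of_update_mem (j := 2) (a := 0) (b := ![3, 2 * m + 1, 1])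
    (Set.right_mem_Icc.1 (mem_box.2 ?_)) rfl (fun v hv => mem_box.2 ?_) (fun v hv => ?_)
    fun v hv z hz => ?_
  · simp only [Matrix.cons_val]
    omega
  · rw [mem_tray] at hv
    simp only [Matrix.cons_val]
    omega
  · rw [mem_box] at hv
    simp only [Function.update, Matrix.cons_val] at hv
    rw [mem_tray]
    grind
  · rw [mem_tray] at hv ⊢
    grind

section RimPath

variable {m : ℕ}

/-- The closed path along the rim from `(0, 0)` up the side `x = 0`, across `y = 2m + 1`, down
`x = 3`, and back along `y = 0`, which is at its starting point again at time `4m + 8`. Later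
times are junk values. -/
def rimPath (m k : ℕ) : ℤ × ℤ :=
  if k ≤ 2 * m + 1 then (0, k)
  else if k ≤ 2 * m + 4 then (k - (2 * m + 1), 2 * m + 1)
  else if k ≤ 4 * m + 5 then (3, 4 * m + 5 - k)
  else (4 * m + 8 - k, 0)

lemma rimPath_mem_rim {k : ℕ} (hk : k ≤ 4 * m + 8) : rimPath m k ∈ rim m := by
  grind [rimPath, mem_rim]

lemma exists_rimPath_eq {p : ℤ × ℤ} (hp : p ∈ rim m) : ∃ k < 4 * m + 8, rimPath m k = p := by
  rw [mem_rim] at hp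
  obtain h | h | h | h : p.1 = 0 ∨ p.2 = 2 * m + 1 ∨ p.1 = 3 ∨ p.2 = 0 ∧ 0 < p.1 := by omega
  · exact ⟨p.2.toNat, by grind [rimPath]⟩
  · exact ⟨(2 * m + 1 + p.1).toNat, by grind [rimPath]⟩
  · exact ⟨(4 * m + 5 - p.2).toNat, by grind [rimPath]⟩
  · exact ⟨(4 * m + 8 - p.1).toNat, by grind [rimPath]⟩

lemma rimPath_eq_rimPath_iff {i j : ℕ} (hi : i ≤ 4 * m + 8) (hj : j ≤ 4 * m + 8) :
    rimPath m i = rimPath m j ↔ i = j ∨ i = 0 ∧ j = 4 * m + 8 ∨ i = 4 * m + 8 ∧ j = 0 := by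
  grind [rimPath]

lemma cellAdj_rimPath (m k : ℕ) : CellAdj (rimPath m k) (rimPath m (k + 1)) := by
  grind [CellAdj, rimPath]

lemma eq_rimPath_of_cellAdj (hm : 0 < m) {k : ℕ} (hk : k + 1 < 4 * m + 8) {q : ℤ × ℤ}
    (hq : q ∈ rim m) (hadj : CellAdj (rimPath m (k + 1)) q) :
    q = rimPath m k ∨ q = rimPath m (k + 2) := by
  grind [CellAdj, rimPath, mem_rim]

end RimPath

section TrayTilings

variable {m : ℕ}

/-- The upright slab over the `k`-th step of the rim path. -/
def wall (m k : ℕ) : Set (Fin 3 → ℤ) := column (rimPath m k) ∪ column (rimPath m (k + 1))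

/-- The horizontal slab on the floor with `x ∈ {1, 2}` and `y ∈ {k, k + 1}`. -/
def plate (k : ℕ) : Set (Fin 3 → ℤ) := slab 2 ![1, k, 0]

/-- The tiling of the tray by every other wall, starting with the one of index `r`, and by the
plates inside the rim. Its intended parameters are `r = 0` and `r = 1`. -/
def trayTiling (m r : ℕ) : Set (Set (Fin 3 → ℤ)) :=
  (fun k => wall m (2 * k + r)) '' Set.Iio (2 * m + 4) ∪
    (fun k => plate (2 * k + 1)) '' Set.Iio m

lemma mem_plate {k : ℕ} {v : Fin 3 → ℤ} :
    v ∈ plate k ↔ (v 0 = 1 ∨ v 0 = 2) ∧ (v 1 = k ∨ v 1 = k + 1) ∧ v 2 = 0 := by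
  simp [plate, mem_slab]

lemma isSlab_wall (m k : ℕ) : IsSlab (wall m k) :=
  isSlab_iff.2 (exists_column_union_eq_slab (cellAdj_rimPath m k))

lemma shadow_image_column (p : ℤ × ℤ) : shadow '' column p = {p} := by
  refine Set.Subset.antisymm ?_ (Set.singleton_subset_iff.2 ?_)
  · rintro _ ⟨v, hv, rfl⟩
    exact hv.1
  · exact ⟨![p.1, p.2, 0], by simp [mem_column], rfl⟩

lemma shadow_image_wall (m k : ℕ) :
    shadow '' wall m k = {rimPath m k, rimPath m (k + 1)} := by
  rw [wall, Set.image_union, shadow_image_column, shadow_image_column, Set.singleton_union]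

lemma mem_wall {k : ℕ} {v : Fin 3 → ℤ} : v ∈ wall m k ↔
    (shadow v = rimPath m k ∨ shadow v = rimPath m (k + 1)) ∧ (v 2 = 0 ∨ v 2 = 1) :=
  or_and_right.symm

lemma wall_nonempty (m k : ℕ) : (wall m k).Nonempty :=
  Set.image_nonempty.1 (shadow_image_wall m k ▸ Set.insert_nonempty _ _)

lemma wall_inter_wall_succ_nonempty (m k : ℕ) : (wall m k ∩ wall m (k + 1)).Nonempty := by
  obtain ⟨v, hv, -⟩ : rimPath m (k + 1) ∈ shadow '' column (rimPath m (k + 1)) := by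
    simp [shadow_image_column]
  exact ⟨v, .inr hv, .inl hv⟩

lemma wall_injOn (m : ℕ) : Set.InjOn (wall m) (Set.Iio (4 * m + 8)) := by
  intro i hi j hj hij
  rw [Set.mem_Iio] at hi hj
  have hpair := congrArg (shadow '' ·) hij
  simp only [shadow_image_wall, Set.pair_eq_pair_iff] at hpair
  grind [rimPath_eq_rimPath_iff]

lemma shadow_mem_rim_of_mem_wall {k : ℕ} (hk : k < 4 * m + 8) {v : Fin 3 → ℤ}
    (hv : v ∈ wall m k) : shadow v ∈ rim m := by
  obtain ⟨h | h, -⟩ := mem_wall.1 hv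
  · exact h ▸ rimPath_mem_rim hk.le
  · exact h ▸ rimPath_mem_rim hk

lemma shadow_notMem_rim_of_mem_plate {k : ℕ} (hk : 0 < k) (hkm : k < 2 * m) {v : Fin 3 → ℤ}
    (hv : v ∈ plate k) : shadow v ∉ rim m := by
  rw [mem_plate] at hv
  simp only [mem_rim, shadow]
  omega

lemma mem_tray_of_shadow_mem_rim {v : Fin 3 → ℤ} (hv : shadow v ∈ rim m)
    (hv2 : v 2 = 0 ∨ v 2 = 1) : v ∈ tray m :=
  ⟨hv.1, hv2.imp_right fun h => ⟨h, hv⟩⟩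

lemma exists_wall_of_shadow_mem_rim {r : ℕ} (hr : r ≤ 1) {v : Fin 3 → ℤ} (hv : shadow v ∈ rim m)
    (hv2 : v 2 = 0 ∨ v 2 = 1) : ∃ k < 2 * m + 4, v ∈ wall m (2 * k + r) := by
  obtain ⟨i, hi, hiv⟩ := exists_rimPath_eq hv
  have hends := (rimPath_eq_rimPath_iff (m := m) (i := 4 * m + 8) (j := 0) le_rfl (by omega)).2
    (by simp)
  obtain ⟨k, hk, h⟩ : ∃ k < 2 * m + 4, shadow v = rimPath m (2 * k + r) ∨
      shadow v = rimPath m (2 * k + r + 1) := by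
    obtain hri | hri := le_or_gt r i
    · exact ⟨(i - r) / 2, by omega, by grind⟩
    · exact ⟨2 * m + 3, by omega, by grind⟩
  exact ⟨k, hk, mem_wall.2 ⟨h, hv2⟩⟩

lemma exists_plate_of_shadow_notMem_rim {v : Fin 3 → ℤ} (hv : v ∈ tray m)
    (hrim : shadow v ∉ rim m) : ∃ k < m, v ∈ plate (2 * k + 1) := by
  rw [mem_tray] at hv
  simp only [mem_rim, shadow] at hrim
  refine ⟨((v 1 - 1) / 2).toNat, by omega, mem_plate.2 ?_⟩
  omega

lemma trayTiling_pairwiseDisjoint {r : ℕ} (hr : r ≤ 1) : (trayTiling m r).PairwiseDisjoint id := by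
  rintro _ (⟨i, hi, rfl⟩ | ⟨i, hi, rfl⟩) _ (⟨j, hj, rfl⟩ | ⟨j, hj, rfl⟩) hne <;>
    refine Set.disjoint_left.2 fun v hvi hvj => ?_ <;> rw [Set.mem_Iio] at hi hj
  · refine hne (congrArg (fun k => wall m (2 * k + r)) ?_)
    rw [id, mem_wall] at hvi hvj
    grind [rimPath_eq_rimPath_iff]
  · exact shadow_notMem_rim_of_mem_plate (by omega) (by omega) hvj
      (shadow_mem_rim_of_mem_wall (by omega) hvi)
  · exact shadow_notMem_rim_of_mem_plate (by omega) (by omega) hvi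
      (shadow_mem_rim_of_mem_wall (by omega) hvj)
  · refine hne (congrArg (fun k => plate (2 * k + 1)) ?_)
    rw [id, mem_plate] at hvi hvj
    omega

lemma sUnion_trayTiling {r : ℕ} (hr : r ≤ 1) : ⋃₀ trayTiling m r = tray m := by
  ext v
  constructor
  · rintro ⟨_, ⟨k, hk, rfl⟩ | ⟨k, hk, rfl⟩, hv⟩ <;> rw [Set.mem_Iio] at hk
    · exact mem_tray_of_shadow_mem_rim (shadow_mem_rim_of_mem_wall (by omega) hv)
        (mem_wall.1 hv).2
    · rw [mem_plate] at hv
      rw [mem_tray]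
      omega
  · intro hv
    by_cases hrim : shadow v ∈ rim m
    · obtain ⟨k, hk, hvk⟩ := exists_wall_of_shadow_mem_rim hr hrim (hv.2.imp_right And.left)
      exact ⟨_, .inl ⟨k, hk, rfl⟩, hvk⟩
    · obtain ⟨k, hk, hvk⟩ := exists_plate_of_shadow_notMem_rim hv hrim
      exact ⟨_, .inr ⟨k, hk, rfl⟩, hvk⟩

lemma isTiling_trayTiling {r : ℕ} (hr : r ≤ 1) : IsTiling IsSlab (tray m) (trayTiling m r) := by
  refine ⟨?_, trayTiling_pairwiseDisjoint hr, sUnion_trayTiling hr⟩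
  rintro _ (⟨k, -, rfl⟩ | ⟨k, -, rfl⟩)
  · exact ⟨isSlab_wall _ _, wall_nonempty _ _⟩
  · exact ⟨isSlab_slab _ _, slab_nonempty _ _⟩

lemma trayTiling_zero_sdiff_one (m : ℕ) :
    trayTiling m 0 \ trayTiling m 1 = (fun k => wall m (2 * k)) '' Set.Iio (2 * m + 4) := by
  ext s
  constructor
  · rintro ⟨hs | hs, hs'⟩
    · exact hs
    · exact absurd (.inr hs) hs'
  · rintro ⟨i, hi, rfl⟩
    rw [Set.mem_Iio] at hi
    refine ⟨.inl ⟨i, hi, rfl⟩, ?_⟩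
    rintro (⟨j, hj, hij⟩ | ⟨j, hj, hij⟩) <;> rw [Set.mem_Iio] at hj
    · have := wall_injOn m (x₁ := 2 * j + 1) (x₂ := 2 * i) (by grind) (by grind) hij
      omega
    · obtain ⟨v, hv⟩ := wall_nonempty m (2 * i)
      exact shadow_notMem_rim_of_mem_plate (k := 2 * j + 1) (by omega) (by omega)
        (hij.superset hv) (shadow_mem_rim_of_mem_wall (by omega) hv)

lemma ncard_trayTiling_zero_sdiff_one (m : ℕ) :
    (trayTiling m 0 \ trayTiling m 1).ncard = 2 * m + 4 := by
  have hinj : Set.InjOn (fun k => wall m (2 * k)) (Set.Iio (2 * m + 4)) := by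
    intro i hi j hj hij
    have := wall_injOn m (x₁ := 2 * i) (x₂ := 2 * j) (by grind) (by grind) hij
    omega
  rw [trayTiling_zero_sdiff_one, hinj.ncard_image, Set.ncard_Iio_nat]

section Uniqueness

variable {T : Set (Set (Fin 3 → ℤ))}

lemma upright_of_slab_subset_tray (hm : 0 < m) {i : Fin 3} {t v : Fin 3 → ℤ}
    (hsub : slab i t ⊆ tray m) (hv : v ∈ slab i t) (hv2 : v 2 = 1) : i ≠ 2 ∧ t 2 = 0 := by
  have corner (w) (hw : w ∈ slab i t) := mem_tray.1 (hsub hw)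
  rw [mem_slab, hv2] at hv
  obtain rfl | hi := eq_or_ne i 2
  · have := corner t (by simp [mem_slab])
    have := corner ![t 0 + 1, t 1 + 1, t 2] (by simp [mem_slab])
    have := corner ![t 0 + 1, t 1, t 2] (by simp [mem_slab])
    have := corner ![t 0, t 1 + 1, t 2] (by simp [mem_slab])
    simp only [Matrix.cons_val] at *
    omega
  · have := corner ![t 0, t 1, t 2 + 1] (by simp [mem_slab, hi.symm])
    simp only [Matrix.cons_val] at this
    exact ⟨hi, by omega⟩

lemma exists_cellAdj_of_slab_subset_tray (hm : 0 < m) {i : Fin 3} {t v : Fin 3 → ℤ}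
    (hsub : slab i t ⊆ tray m) (hv : v ∈ slab i t) (hv2 : v 2 = 1) :
    ∃ q ∈ rim m, CellAdj (shadow v) q ∧ slab i t = column (shadow v) ∪ column q := by
  obtain ⟨hi, ht⟩ := upright_of_slab_subset_tray hm hsub hv hv2
  obtain ⟨q, hadj, hq⟩ := exists_slab_eq_column_union hi ht hv
  have hqtop : ![q.1, q.2, 1] ∈ slab i t := hq ▸ .inr (by simp [mem_column])
  obtain ⟨-, h | ⟨-, hqrim⟩⟩ := hsub hqtop
  · simp at h
  · exact ⟨q, hqrim, hadj, hq⟩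

lemma exists_column_union_mem (hm : 0 < m) (hT : IsTiling IsSlab (tray m) T) {p : ℤ × ℤ}
    (hp : p ∈ rim m) : ∃ q ∈ rim m, CellAdj p q ∧ column p ∪ column q ∈ T := by
  obtain ⟨s, hs, hps⟩ := hT.exists_mem (v := ![p.1, p.2, 1])
    (mem_tray_of_shadow_mem_rim hp (.inr rfl))
  obtain ⟨i, t, rfl⟩ := isSlab_iff.1 (hT.1 s hs).1
  obtain ⟨q, hq, hpq, hst⟩ := exists_cellAdj_of_slab_subset_tray hm (hT.subset hs) hps rfl
  exact ⟨q, hq, hpq, hst ▸ hs⟩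

lemma wall_mem_or_wall_succ_mem (hm : 0 < m) (hT : IsTiling IsSlab (tray m) T) {k : ℕ}
    (hk : k + 1 < 4 * m + 8) : wall m k ∈ T ∨ wall m (k + 1) ∈ T := by
  obtain ⟨q, hq, hadj, hqT⟩ := exists_column_union_mem hm hT (rimPath_mem_rim hk.le)
  obtain rfl | rfl := eq_rimPath_of_cellAdj hm hk hq hadj
  · exact .inl (by rwa [wall, Set.union_comm])
  · exact .inr hqT

lemma shadow_mem_rim_of_mem (hm : 0 < m) (hT : IsTiling IsSlab (tray m) T)
    {s : Set (Fin 3 → ℤ)} (hs : s ∈ T) {v w : Fin 3 → ℤ} (hv : v ∈ s) (hw : w ∈ s)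
    (hvrim : shadow v ∈ rim m) : shadow w ∈ rim m := by
  obtain ⟨q, hq, -, hqT⟩ := exists_column_union_mem hm hT hvrim
  have hvcol : v ∈ column (shadow v) ∪ column q :=
    .inl ⟨rfl, (hT.subset hs hv).2.imp_right And.left⟩
  obtain ⟨h, -⟩ | ⟨h, -⟩ := hT.eq_of_mem_of_mem hs hqT hv hvcol ▸ hw
  · exact h ▸ hvrim
  · exact h ▸ hq

lemma exists_slab_eq_plate {i : Fin 3} {t : Fin 3 → ℤ} (hsub : slab i t ⊆ tray m)
    (hrim : ∀ v ∈ slab i t, shadow v ∉ rim m) : ∃ k : ℕ, slab i t = plate k := by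
  have corner {v} (hv : v ∈ slab i t) : v 2 = 0 ∧ 1 ≤ v 0 ∧ v 0 ≤ 2 ∧ 1 ≤ v 1 := by
    have htray := mem_tray.1 (hsub hv)
    have := mem_rim.not.1 (hrim v hv)
    simp only [shadow] at this
    omega
  obtain ⟨ht2, ht0, -, ht1⟩ := corner (v := t) (by simp [mem_slab])
  obtain rfl : i = 2 := by
    by_contra hi
    have htop := (corner (v := ![t 0, t 1, t 2 + 1]) (by simp [mem_slab, Ne.symm hi])).1
    simp only [Matrix.cons_val] at htop
    omega
  have hx := (corner (v := ![t 0 + 1, t 1, t 2]) (by simp [mem_slab])).2.2.1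
  simp only [Matrix.cons_val] at hx
  refine ⟨(t 1).toNat, congrArg (slab 2) ?_⟩
  ext l
  fin_cases l <;> simp only [Fin.zero_eta, Fin.mk_one, Fin.reduceFinMk, Matrix.cons_val] <;> omega

lemma plate_mem_or_plate_succ_mem (hT : IsTiling IsSlab (tray m) T) {k : ℕ}
    (hk : k < 2 * m) : plate k ∈ T ∨ plate (k + 1) ∈ T := by
  have hcell : ![1, (k : ℤ) + 1, 0] ∈ tray m := by
    refine mem_tray.2 ⟨?_, .inl rfl⟩
    simp only [Matrix.cons_val]
    omega
  obtain ⟨s, hs, hvs⟩ := hT.exists_mem hcell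
  have hrim (w) (hw : w ∈ s) : shadow w ∉ rim m := fun h => by
    have := mem_rim.1 (shadow_mem_rim_of_mem (by omega) hT hs hw hvs h)
    simp only [shadow, Matrix.cons_val] at this
    omega
  obtain ⟨i, t, rfl⟩ := isSlab_iff.1 (hT.1 s hs).1
  obtain ⟨j, hj⟩ := exists_slab_eq_plate (hT.subset hs) hrim
  rw [hj] at hs hvs
  have hjk := (mem_plate.1 hvs).2.1
  simp only [Matrix.cons_val] at hjk
  obtain rfl | rfl : j = k ∨ j = k + 1 := by omega
  · exact .inl hs
  · exact .inr hs

lemma plate_one_mem (hm : 0 < m) (hT : IsTiling IsSlab (tray m) T) : plate 1 ∈ T := by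
  refine (plate_mem_or_plate_succ_mem hT (k := 0) (by omega)).resolve_left fun h => ?_
  have hrim : shadow ![1, 1, 0] ∈ rim m :=
    shadow_mem_rim_of_mem hm hT h (v := ![1, 0, 0]) (by simp [mem_plate]) (by simp [mem_plate])
      (by simp [mem_rim, shadow]; omega)
  simp only [mem_rim, shadow, Matrix.cons_val] at hrim
  omega

lemma plate_mem (hT : IsTiling IsSlab (tray m) T) {k : ℕ} (hk : k < m) :
    plate (2 * k + 1) ∈ T := by
  have hoverlap (j : ℕ) : (plate j ∩ plate (j + 1)).Nonempty :=
    ⟨![1, (j : ℤ) + 1, 0], by simp [mem_plate]⟩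
  have hne (j : ℕ) : plate j ≠ plate (j + 1) := fun h => by
    have : ![1, (j : ℤ), 0] ∈ plate (j + 1) := h ▸ by simp [mem_plate]
    simp only [mem_plate, Matrix.cons_val] at this
    omega
  have hcover (j : ℕ) (hj : j + 1 < 2 * m + 1) : plate j ∈ T ∨ plate (j + 1) ∈ T :=
    plate_mem_or_plate_succ_mem hT (by omega)
  have := hT.add_two_mul_mem hoverlap (fun j _ => hne j) hcover (plate_one_mem (by omega) hT) k
    (by omega)
  rwa [add_comm] at this

lemma eq_trayTiling_of_wall_mem (hm : 0 < m) (hT : IsTiling IsSlab (tray m) T) {r : ℕ}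
    (hr : r ≤ 1) (hwall : wall m r ∈ T) : T = trayTiling m r := by
  refine hT.eq_of_subset (isTiling_trayTiling hr) ?_
  rintro _ (⟨k, hk, rfl⟩ | ⟨k, hk, rfl⟩) <;> rw [Set.mem_Iio] at hk
  · change wall m (2 * k + r) ∈ T
    rw [add_comm]
    exact hT.add_two_mul_mem (wall_inter_wall_succ_nonempty m)
      (fun k hk h => k.succ_ne_self (wall_injOn m (by grind) (by grind) h.symm))
      (fun k hk => wall_mem_or_wall_succ_mem hm hT hk) hwall k (by omega)
  · exact plate_mem hT hk

lemma eq_trayTiling_zero_or_one (hm : 0 < m) (hT : IsTiling IsSlab (tray m) T) :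
    T = trayTiling m 0 ∨ T = trayTiling m 1 :=
  (wall_mem_or_wall_succ_mem hm hT (k := 0) (by omega)).imp
    (eq_trayTiling_of_wall_mem hm hT zero_le_one) (eq_trayTiling_of_wall_mem hm hT le_rfl)

end Uniqueness

end TrayTilings

end Tray

/-- Slab tilings of contractible regions in `ℝ³` do not have the local move
property: for every `n` there is a contractible region with exactly two slab
tilings, and these differ in at least `n` tiles. -/
theorem slab_no_local_move_property :
    ∀ n : ℕ, ∃ Γ : Set (Fin 3 → ℤ), IsContractibleRegion Γ ∧
      ∃ T₁ T₂ : Set (Set (Fin 3 → ℤ)), T₁ ≠ T₂ ∧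
        IsTiling IsSlab Γ T₁ ∧ IsTiling IsSlab Γ T₂ ∧
        (∀ T, IsTiling IsSlab Γ T → T = T₁ ∨ T = T₂) ∧
        n ≤ (T₁ \ T₂).ncard := by
  intro n
  have hncard := ncard_trayTiling_zero_sdiff_one (n + 1)
  have hne : trayTiling (n + 1) 0 ≠ trayTiling (n + 1) 1 := fun h => by
    rw [h, Set.sdiff_self, Set.ncard_empty] at hncard
    omega
  exact ⟨tray (n + 1), isContractibleRegion_tray _, trayTiling (n + 1) 0, trayTiling (n + 1) 1,
    hne, isTiling_trayTiling zero_le_one, isTiling_trayTiling le_rfl,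
    fun T => eq_trayTiling_zero_or_one n.succ_pos, by omega⟩
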